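/- Let g ∈ L¹(ℝ) be a totally positive function of finite type m ≥ 2, identified with its continuous representative, and let a, K, M ∈ ℕ with K/a ∈ ℕ and K/M ∈ ℕ. If a/M < 1, then the Gabor family G(P_K S g, a, 1/M) is a frame for ℂ^K: there exist A, B > 0 such that A‖f‖² ≤ Σ_{k=0}^{K/a−1} Σ_{l=0}^{M−1} |⟨f, M_{l/M}T_{ka}(P_K S g)⟩|² ≤ B‖f‖² for all f ∈ ℂ^K. -/

import Mathlib

/-!
In finite dimension the frame property amounts to injectivity of the analysis map
(`isGaborFrameC_of_injective`). Suppose that all Gabor coefficients of `f` vanish. Orthogonality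
of the characters modulo `M` decouples the residue classes: for each `r` the function
`Φ = ∑ₛ c s * g (· - s M)`, with the periodic coefficients `c s = f (r - s M)`, vanishes on the
progression `r + a ℤ` (`sum_residue_eq_zero`, `sum_residue_eq_tsum`). It remains to see that
`a < M` forces `c = 0` (`shift_coeff_eq_zero`).

By Fourier inversion `g` arises from a one-sided exponential by applying the operators
`(1 + δ D)⁻¹` for the other parameters (`eq_chain`). Summing shifts commutes with these operators,
so `Φ` arises in the same way from a function that on each knot interval `[k M, (k + 1) M)` is a
multiple of one exponential. Now sign changes are counted. By Rolle's argument for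
`exp (x / δ) Φ x`, zeros of `Φ` separated by nonzero values give alternating signs one level down,
and undoing each further operator costs at most one alternation, and none if there is a zero at the
left endpoint of the interval. At the bottom, alternating points lie in different knot
intervals. There are three cases (`chain_coeff_eq_zero`).

* `Φ` vanishes on no knot interval: on a long window the zeros of `Φ` have density `1 / a`, so
  there are more alternations than knot intervals, even after the bounded loss.
* `Φ` vanishes on some but not all knot intervals: a maximal block of `ℓ` intervals on which it
  does not vanish contains, with its endpoints, at least `ℓ + 2` zeros of `Φ`. No alternation is
  lost, so there are `ℓ + 1` of them in `ℓ` knot intervals.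
* `Φ` vanishes identically: then so does the function at the bottom, and its jumps recover `c`.
-/

open MeasureTheory Complex FourierTransform

/-- Periodization and sampling: `(P_K S g)(j) = ∑_{n ∈ ℤ} g(j - nK)`, viewed as a
`K`-periodic sequence on `ℤ`. -/
noncomputable def periodizeSample (K : ℕ) (g : ℝ → ℂ) (j : ℤ) : ℂ :=
  ∑' n : ℤ, g ((j : ℝ) - n * K)

/-- The Gabor coefficient `⟨f, M_{l/M} T_{ka} g⟩` in `ℂ^K`, for a `K`-periodic
window sequence `g : ℤ → ℂ`, where `(M_{l/M}T_{ka}g)(j) = g(j - ka) e^{2πi l j/M}`. -/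
noncomputable def gaborCoefC (g : ℤ → ℂ) (K a M : ℕ) (f : Fin K → ℂ) (k l : ℕ) : ℂ :=
  ∑ j : Fin K, f j * star (g ((j : ℤ) - k * (a : ℤ)) *
    Complex.exp (2 * (Real.pi : ℂ) * Complex.I * (l : ℂ) * ((j : ℕ) : ℂ) / (M : ℂ)))

/-- The Gabor family `G(g, a, 1/M)` is a frame for `ℂ^K`. -/
def IsGaborFrameC (g : ℤ → ℂ) (K a M : ℕ) : Prop :=
  ∃ A B : ℝ, 0 < A ∧ 0 < B ∧ ∀ f : Fin K → ℂ,
    A * (∑ j : Fin K, ‖f j‖ ^ 2) ≤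
        (∑ k ∈ Finset.range (K / a), ∑ l ∈ Finset.range M, ‖gaborCoefC g K a M f k l‖ ^ 2) ∧
      (∑ k ∈ Finset.range (K / a), ∑ l ∈ Finset.range M, ‖gaborCoefC g K a M f k l‖ ^ 2) ≤
        B * (∑ j : Fin K, ‖f j‖ ^ 2)

/-! ### The operator `(1 + δ D)⁻¹` -/

/-- The operator `(1 + δ D)⁻¹`: averaging of `f` against an exponential law in the direction
`-δ`.  It is convolution with the one-sided exponential `expKernel δ`, in a form that does not
distinguish the signs of `δ`. -/
noncomputable def expAvg (δ : ℝ) (f : ℝ → ℝ) (x : ℝ) : ℝ :=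
  ∫ t in Set.Ioi (0 : ℝ), Real.exp (-t) * f (x - δ * t)

/-- Measurable and bounded: the class of functions on which `expAvg` is used. -/
def BddMeas (f : ℝ → ℝ) : Prop := Measurable f ∧ ∃ B, ∀ x, |f x| ≤ B

lemma integrableOn_exp_neg_Ioi_zero : IntegrableOn (fun t : ℝ => Real.exp (-t)) (Set.Ioi 0) := by
  simpa using integrableOn_exp_mul_Ioi (a := -1) (by norm_num) 0

lemma expAvg_neg (δ : ℝ) (f : ℝ → ℝ) (x : ℝ) :
    expAvg δ f x = expAvg (-δ) (fun y => f (-y)) (-x) := by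
  unfold expAvg
  congr 1; ext t; congr 2; ring

lemma BddMeas.integrableOn_Ioi {f : ℝ → ℝ} (hf : BddMeas f) {δ : ℝ} (hδ : δ < 0) (x : ℝ) :
    IntegrableOn (fun t => Real.exp (t / δ) * f t) (Set.Ioi x) := by
  obtain ⟨hm, B, hB⟩ := hf
  have h := integrableOn_exp_mul_Ioi (a := δ⁻¹) (inv_lt_zero.mpr hδ) x
  have h2 : IntegrableOn (fun t => Real.exp (t / δ)) (Set.Ioi x) := by
    refine h.congr_fun (fun t _ => ?_) measurableSet_Ioi
    simp only []; congr 1; ring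
  refine Integrable.mul_bdd (c := B) h2 hm.aestronglyMeasurable ?_
  exact Filter.Eventually.of_forall hB

lemma expAvg_eq_of_neg {f : ℝ → ℝ} {δ : ℝ} (hδ : δ < 0) (x : ℝ) :
    Real.exp (x / δ) * expAvg δ f x = (-δ)⁻¹ * ∫ t in Set.Ioi x, Real.exp (t / δ) * f t := by
  have h1 := integral_comp_mul_left_Ioi
    (fun v => Real.exp ((x + v) / δ) * f (x + v)) 0 (b := -δ) (by linarith)
  have h2 : ∫ v in Set.Ioi (0 : ℝ), Real.exp ((x + v) / δ) * f (x + v)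
      = ∫ t in Set.Ioi x, Real.exp (t / δ) * f t := by
    have hmp := measurePreserving_add_left (volume : Measure ℝ) x
    have := hmp.setIntegral_preimage_emb (measurableEmbedding_addLeft x)
      (fun t => Real.exp (t / δ) * f t) (Set.Ioi x)
    simpa using this
  rw [mul_zero, h2, smul_eq_mul] at h1
  rw [← h1, expAvg, ← integral_const_mul]
  congr 1; ext t
  have : (x + -δ * t) / δ = x / δ + -t := by
    have := hδ.ne
    field_simp
  rw [this, Real.exp_add]
  have : x + -δ * t = x - δ * t := by ring
  rw [this]; ring

lemma BddMeas.neg_comp {f : ℝ → ℝ} (hf : BddMeas f) : BddMeas (fun y => f (-y)) :=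
  ⟨hf.1.comp measurable_neg, hf.2.imp fun _ h _ => h _⟩

lemma BddMeas.intervalIntegrable {f : ℝ → ℝ} (hf : BddMeas f) (δ x y : ℝ) :
    IntervalIntegrable (fun t => Real.exp (t / δ) * f t) volume x y := by
  obtain ⟨hm, B, hB⟩ := hf
  have h : IntervalIntegrable (fun t => Real.exp (t / δ)) volume x y :=
    (by fun_prop : Continuous fun t => Real.exp (t / δ)).intervalIntegrable _ _
  exact ⟨h.1.mul_bdd (c := B) hm.aestronglyMeasurable (Filter.Eventually.of_forall hB),
    h.2.mul_bdd (c := B) hm.aestronglyMeasurable (Filter.Eventually.of_forall hB)⟩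

/-- The differential equation `(1 + δ D) (expAvg δ f) = f`, integrated with the factor
`exp (t / δ)`. -/
lemma expAvg_sub {f : ℝ → ℝ} (hf : BddMeas f) {δ : ℝ} (hδ : δ ≠ 0) (x y : ℝ) :
    Real.exp (y / δ) * expAvg δ f y - Real.exp (x / δ) * expAvg δ f x
      = δ⁻¹ * ∫ t in x..y, Real.exp (t / δ) * f t := by
  have key : ∀ {f : ℝ → ℝ} (_ : BddMeas f) {δ : ℝ} (_ : δ < 0) (x y : ℝ),
      Real.exp (y / δ) * expAvg δ f y - Real.exp (x / δ) * expAvg δ f x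
      = δ⁻¹ * ∫ t in x..y, Real.exp (t / δ) * f t := by
    intro f hf δ hδ x y
    rw [expAvg_eq_of_neg hδ, expAvg_eq_of_neg hδ,
      ← intervalIntegral.integral_Ioi_sub_Ioi' (hf.integrableOn_Ioi hδ x)
        (hf.integrableOn_Ioi hδ y), inv_neg]
    ring
  rcases lt_or_gt_of_ne hδ with h | h
  · exact key hf h x y
  · have := key hf.neg_comp (δ := -δ) (by linarith) (-x) (-y)
    rw [expAvg_neg δ f x, expAvg_neg δ f y]
    simp only [neg_div_neg_eq] at this
    rw [this, inv_neg, intervalIntegral.integral_symm]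
    have h3 := intervalIntegral.integral_comp_neg (a := x) (b := y)
      (fun t => Real.exp (t / -δ) * f (-t))
    rw [← h3]
    simp

lemma expAvg_continuous {f : ℝ → ℝ} (hf : BddMeas f) {δ : ℝ} (hδ : δ ≠ 0) :
    Continuous (expAvg δ f) := by
  have h := intervalIntegral.continuous_primitive (μ := volume)
    (fun a b => hf.intervalIntegrable δ a b) 0
  have h2 : expAvg δ f = fun y => Real.exp (-(y / δ)) * (Real.exp (0 / δ) * expAvg δ f 0 +
      δ⁻¹ * ∫ t in (0 : ℝ)..y, Real.exp (t / δ) * f t) := by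
    ext y
    rw [← expAvg_sub hf hδ, add_sub_cancel, ← mul_assoc, ← Real.exp_add]
    simp
  rw [h2]
  exact (by fun_prop : Continuous fun y => Real.exp (-(y / δ))).mul
    (continuous_const.add (continuous_const.mul h))

lemma expAvg_bddMeas {f : ℝ → ℝ} (hf : BddMeas f) {δ : ℝ} (hδ : δ ≠ 0) :
    BddMeas (expAvg δ f) := by
  refine ⟨(expAvg_continuous hf hδ).measurable, ?_⟩
  obtain ⟨hm, B, hB⟩ := hf
  refine ⟨B, fun x => ?_⟩
  have := norm_integral_le_of_norm_le (μ := volume.restrict (Set.Ioi (0 : ℝ)))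
    (f := fun t => Real.exp (-t) * f (x - δ * t))
    (integrableOn_exp_neg_Ioi_zero.mul_const B) (Filter.Eventually.of_forall fun t => by
      rw [norm_mul, Real.norm_of_nonneg (Real.exp_nonneg _)]
      exact mul_le_mul_of_nonneg_left (hB _) (Real.exp_nonneg _))
  rw [integral_mul_const, integral_exp_neg_Ioi_zero, one_mul] at this
  exact this

/-- Rolle's step: between two points, `δ⁻¹ f` somewhere takes the sign of the increment of
`exp (· / δ) * expAvg δ f`. -/
lemma exists_sign_of_increment {f : ℝ → ℝ} (hf : BddMeas f) {δ : ℝ} (hδ : δ ≠ 0) {x y σ : ℝ}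
    (hxy : x < y)
    (h : 0 < σ * (Real.exp (y / δ) * expAvg δ f y - Real.exp (x / δ) * expAvg δ f x)) :
    ∃ t ∈ Set.Ioo x y, 0 < σ * δ⁻¹ * f t := by
  by_contra! hcon
  rw [expAvg_sub hf hδ, ← mul_assoc, ← intervalIntegral.integral_const_mul,
    intervalIntegral.integral_of_le hxy.le, integral_Ioc_eq_integral_Ioo] at h
  refine absurd h (not_lt.mpr (setIntegral_nonpos measurableSet_Ioo fun t ht => ?_))
  have := hcon t ht
  have h2 := Real.exp_nonneg (t / δ)
  nlinarith

/-- Between two zeros that enclose a nonzero value of `expAvg δ f`, the function `f` takes both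
signs. -/
lemma expAvg_exists_sign {f : ℝ → ℝ} (hf : BddMeas f) {δ : ℝ} (hδ : δ ≠ 0) {x z y : ℝ}
    (hxz : x < z) (hzy : z < y) (hx : expAvg δ f x = 0) (hy : expAvg δ f y = 0)
    (hz : expAvg δ f z ≠ 0) {σ : ℝ} (hσ : σ ≠ 0) : ∃ t ∈ Set.Ioo x y, 0 < σ * f t := by
  have hne : σ * δ * (Real.exp (z / δ) * expAvg δ f z) ≠ 0 := by
    have := Real.exp_pos (z / δ)
    positivity
  rcases lt_or_gt_of_ne hne with h | h
  · obtain ⟨t, ht, h⟩ := exists_sign_of_increment hf hδ (σ := σ * δ) hzy (by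
      rw [hy]; linarith)
    exact ⟨t, ⟨hxz.trans ht.1, ht.2⟩, by field_simp at h; linarith⟩
  · obtain ⟨t, ht, h⟩ := exists_sign_of_increment hf hδ (σ := σ * δ) hxz (by
      rw [hx]; linarith)
    exact ⟨t, ⟨ht.1, ht.2.trans hzy⟩, by field_simp at h; linarith⟩

/-- Right-continuity is what upgrades vanishing almost everywhere to vanishing everywhere. -/
lemma eq_zero_of_expAvg_eq_zero {f : ℝ → ℝ} (hf : BddMeas f) {δ : ℝ} (hδ : δ ≠ 0)
    (hr : ∀ x, ContinuousWithinAt f (Set.Ici x) x) {x y : ℝ}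
    (h : ∀ t ∈ Set.Ico x y, expAvg δ f t = 0) : ∀ t ∈ Set.Ico x y, f t = 0 := by
  intro t ht
  by_contra hne
  -- by right-continuity `f` keeps its sign on some `[t, u)`, so the weighted integral is nonzero
  have hpos : 0 < f t * f t := mul_self_pos.mpr hne
  have hev : ∀ᶠ s in nhdsWithin t (Set.Ici t), 0 < f t * f s :=
    (continuousWithinAt_const.mul (hr t)).eventually (lt_mem_nhds hpos)
  obtain ⟨u, hu, hsub⟩ := (mem_nhdsGE_iff_exists_Ico_subset).mp hev
  have hlt : t < min u y := lt_min hu ht.2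
  obtain ⟨w, hw1, hw2⟩ := exists_between hlt
  have h0 := expAvg_sub hf hδ t w
  rw [h t ht, h w ⟨ht.1.trans hw1.le, hw2.trans_le (min_le_right _ _)⟩] at h0
  have h1 : ∫ s in t..w, f t * (Real.exp (s / δ) * f s) = 0 := by
    rw [intervalIntegral.integral_const_mul]
    have : δ⁻¹ ≠ 0 := inv_ne_zero hδ
    have : ∫ s in t..w, Real.exp (s / δ) * f s = 0 := by
      have h3 : δ⁻¹ * ∫ s in t..w, Real.exp (s / δ) * f s = 0 := by rw [← h0]; ring
      exact (mul_eq_zero.mp h3).resolve_left this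
    rw [this, mul_zero]
  have h2 : 0 < ∫ s in t..w, f t * (Real.exp (s / δ) * f s) := by
    refine intervalIntegral.intervalIntegral_pos_of_pos_on
      ((hf.intervalIntegrable δ t w).const_mul _) (fun s hs => ?_) hw1
    have : 0 < f t * f s := hsub ⟨hs.1.le, hs.2.trans (hw2.trans_le (min_le_left _ _))⟩
    have := mul_pos (Real.exp_pos (s / δ)) this
    linarith
  exact h2.ne' h1

lemma expAvg_eq_zero_of_eq_zero {f : ℝ → ℝ} (hf : BddMeas f) {δ : ℝ} (hδ : δ ≠ 0) {x y z : ℝ}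
    (h : ∀ t ∈ Set.Ico x y, f t = 0) (hz : z ∈ Set.Ico x y) (h0 : expAvg δ f z = 0) :
    ∀ t ∈ Set.Ico x y, expAvg δ f t = 0 := by
  intro t ht
  have h1 := expAvg_sub hf hδ z t
  have h2 : ∫ s in z..t, Real.exp (s / δ) * f s = 0 := by
    rw [intervalIntegral.integral_congr (g := fun _ => (0 : ℝ)), intervalIntegral.integral_zero]
    intro s hs
    have : s ∈ Set.Ico x y := (Set.ordConnected_Ico (a := x) (b := y)).uIcc_subset hz ht hs
    simp [h s this]
  rw [h2, h0] at h1
  have : Real.exp (t / δ) * expAvg δ f t = 0 := by linarith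
  exact (mul_eq_zero.mp this).resolve_left (Real.exp_pos _).ne'

/-! ### Counting sign alternations -/

/-- `f` takes strictly alternating signs at some `N` increasing points of `(α, β)`. -/
def AltOn (f : ℝ → ℝ) (N : ℕ) (α β : ℝ) : Prop :=
  ∃ σ : ℝ, ∃ y : ℕ → ℝ, (∀ i < N, y i ∈ Set.Ioo α β) ∧ (∀ i, i + 1 < N → y i < y (i + 1)) ∧
    ∀ i < N, 0 < σ * (-1) ^ i * f (y i)

lemma altOn_of_increments {f : ℝ → ℝ} (hf : BddMeas f) {δ : ℝ} (hδ : δ ≠ 0) {N : ℕ}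
    {α β σ : ℝ} (z : ℕ → ℝ) (hz : ∀ i ≤ N, z i ∈ Set.Icc α β) (hlt : ∀ i < N, z i < z (i + 1))
    (hs : ∀ i < N, 0 < σ * (-1) ^ i * (Real.exp (z (i + 1) / δ) * expAvg δ f (z (i + 1)) -
      Real.exp (z i / δ) * expAvg δ f (z i))) : AltOn f N α β := by
  have h : ∀ i, ∃ t, i < N → t ∈ Set.Ioo (z i) (z (i + 1)) ∧ 0 < σ * (-1) ^ i * δ⁻¹ * f t := by
    intro i
    by_cases hi : i < N
    · obtain ⟨t, ht, h⟩ := exists_sign_of_increment hf hδ (hlt i hi) (hs i hi)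
      exact ⟨t, fun _ => ⟨ht, h⟩⟩
    · exact ⟨0, fun h => absurd h hi⟩
  choose y hy using h
  refine ⟨σ * δ⁻¹, y, fun i hi => ?_, fun i hi => ?_, fun i hi => ?_⟩
  · have h1 := (hy i hi).1
    exact ⟨(hz i hi.le).1.trans_lt h1.1, h1.2.trans_le (hz (i + 1) hi).2⟩
  · exact (hy i (by omega)).1.2.trans (hy (i + 1) hi).1.1
  · have := (hy i hi).2
    linarith

/-- Inverting `expAvg` costs at most one alternation on an interval. -/
lemma AltOn.step {f : ℝ → ℝ} (hf : BddMeas f) {δ : ℝ} (hδ : δ ≠ 0) {N : ℕ} {α β : ℝ}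
    (h : AltOn (expAvg δ f) (N + 1) α β) : AltOn f N α β := by
  obtain ⟨σ, y, hy, hlt, hs⟩ := h
  refine altOn_of_increments hf hδ (σ := -σ) y
    (fun i hi => Set.Ioo_subset_Icc_self (hy i (by omega))) (fun i hi => hlt i (by omega))
    fun i hi => ?_
  have h1 := mul_pos (Real.exp_pos (y i / δ)) (hs i (by omega))
  have h2 := mul_pos (Real.exp_pos (y (i + 1) / δ)) (hs (i + 1) (by omega))
  rw [pow_succ] at h2
  linarith

/-- Inverting `expAvg` costs no alternation when `expAvg δ f` vanishes at the left endpoint. -/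
lemma AltOn.step_of_zero {f : ℝ → ℝ} (hf : BddMeas f) {δ : ℝ} (hδ : δ ≠ 0) {N : ℕ} {α β : ℝ}
    (hαβ : α ≤ β) (h0 : expAvg δ f α = 0) (h : AltOn (expAvg δ f) N α β) : AltOn f N α β := by
  obtain ⟨σ, y, hy, hlt, hs⟩ := h
  refine altOn_of_increments hf hδ (σ := σ) (fun i => if i = 0 then α else y (i - 1))
    (fun i hi => ?_) (fun i hi => ?_) fun i hi => ?_
  · rcases i with _ | i
    · simpa using hαβ
    · simpa using Set.Ioo_subset_Icc_self (hy i (by omega))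
  · rcases i with _ | i
    · simpa using (hy 0 hi).1
    · simpa using hlt i hi
  · have h2 := mul_pos (Real.exp_pos (y i / δ)) (hs i (by omega))
    rcases i with _ | i
    · simp only [zero_add, one_ne_zero, if_false, if_true, h0, tsub_self]
      linarith
    · have h1 := mul_pos (Real.exp_pos (y i / δ)) (hs i (by omega))
      rw [pow_succ] at h2 ⊢
      simp only [Nat.add_eq_zero_iff, one_ne_zero, and_false, if_false, Nat.add_sub_cancel]
      linarith

/-- The right-continuous functions that are multiples `C k * exp (-x / δ)` of one exponential on
each knot interval `[k M, (k + 1) M)`. -/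
noncomputable def knotFn (δ M : ℝ) (C : ℤ → ℝ) (x : ℝ) : ℝ := Real.exp (-x / δ) * C ⌊x / M⌋

lemma floor_div_eq {M : ℝ} (hM : 0 < M) {x : ℝ} {k : ℤ}
    (h : x ∈ Set.Ico (k * M) ((k + 1) * M)) : ⌊x / M⌋ = k := by
  rw [Int.floor_eq_iff, le_div_iff₀ hM, div_lt_iff₀ hM]
  exact h

lemma mem_knot {M : ℝ} (hM : 0 < M) (x : ℝ) :
    x ∈ Set.Ico ((⌊x / M⌋ : ℝ) * M) ((⌊x / M⌋ + 1) * M) := by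
  constructor
  · rw [← le_div_iff₀ hM]; exact Int.floor_le _
  · rw [← div_lt_iff₀ hM]; exact Int.lt_floor_add_one _

lemma knotFn_rightCont {δ M : ℝ} (hM : 0 < M) (C : ℤ → ℝ) (x : ℝ) :
    ContinuousWithinAt (knotFn δ M C) (Set.Ici x) x := by
  have hc : ContinuousWithinAt (fun y => Real.exp (-y / δ) * C ⌊x / M⌋) (Set.Ici x) x :=
    (by fun_prop : Continuous fun y => Real.exp (-y / δ) * C ⌊x / M⌋).continuousWithinAt
  refine hc.congr_of_eventuallyEq ?_ rfl
  have hm := mem_knot hM x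
  filter_upwards [Ico_mem_nhdsGE hm.2] with y hy
  rw [knotFn, floor_div_eq hM ⟨hm.1.trans hy.1, hy.2⟩]

/-- Points at which `knotFn` alternates lie in different knot intervals. -/
lemma AltOn.floor_le {δ M : ℝ} (hM : 0 < M) {C : ℤ → ℝ} {N : ℕ} {α β : ℝ}
    (h : AltOn (knotFn δ M C) (N + 1) α β) :
    ∃ x ∈ Set.Ioo α β, ∃ y ∈ Set.Ioo α β, ⌊x / M⌋ + N ≤ ⌊y / M⌋ := by
  obtain ⟨σ, y, hy, hlt, hs⟩ := h
  have key : ∀ i, i ≤ N → ⌊y 0 / M⌋ + i ≤ ⌊y i / M⌋ := by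
    intro i
    induction i with
    | zero => simp
    | succ i ih =>
      intro hi
      have h1 := ih (by omega)
      have h2 : ⌊y i / M⌋ ≤ ⌊y (i + 1) / M⌋ :=
        Int.floor_le_floor (div_le_div_of_nonneg_right (hlt i (by omega)).le hM.le)
      have h3 : ⌊y i / M⌋ ≠ ⌊y (i + 1) / M⌋ := by
        intro he
        have ha := hs i (by omega)
        have hb := hs (i + 1) (by omega)
        rw [knotFn, ← mul_assoc, mul_right_comm] at ha hb
        have ha' := pos_of_mul_pos_left ha (Real.exp_nonneg _)
        have hb' := pos_of_mul_pos_left hb (Real.exp_nonneg _)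
        rw [← he, pow_succ] at hb'
        linarith
      push_cast
      omega
  exact ⟨y 0, hy 0 (by omega), y N, hy N (by omega), key N le_rfl⟩

/-- The solution of `∏ (1 + δ D) Φ = G`, the product running over `δ ∈ L`. -/
noncomputable def chain (G : ℝ → ℝ) (L : List ℝ) : ℝ → ℝ := L.foldr expAvg G

lemma chain_cons (G : ℝ → ℝ) (δ : ℝ) (L : List ℝ) :
    chain G (δ :: L) = expAvg δ (chain G L) := rfl

lemma chain_bddMeas {G : ℝ → ℝ} (hG : BddMeas G) (L : List ℝ) (hL : ∀ δ ∈ L, δ ≠ 0) :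
    BddMeas (chain G L) := by
  induction L with
  | nil => exact hG
  | cons δ L ih =>
    exact expAvg_bddMeas (ih fun d hd => hL d (by simp [hd])) (hL δ (by simp))

lemma chain_rightCont {G : ℝ → ℝ} (hG : BddMeas G)
    (hGr : ∀ x, ContinuousWithinAt G (Set.Ici x) x) (L : List ℝ) (hL : ∀ δ ∈ L, δ ≠ 0) (x : ℝ) :
    ContinuousWithinAt (chain G L) (Set.Ici x) x := by
  cases L with
  | nil => exact hGr x
  | cons δ L =>
    exact (expAvg_continuous (chain_bddMeas hG L fun d hd => hL d (by simp [hd]))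
      (hL δ (by simp))).continuousWithinAt

/-- A chain that vanishes on part of a knot interval vanishes on all of it. -/
lemma chain_zero_on_knot {δ₀ M : ℝ} (hM : 0 < M) {C : ℤ → ℝ} (hG : BddMeas (knotFn δ₀ M C))
    (L : List ℝ) (hL : ∀ δ ∈ L, δ ≠ 0) {k : ℤ} {x y : ℝ} (hxy : x < y)
    (hx : k * M ≤ x) (hy : y ≤ (k + 1) * M)
    (h : ∀ t ∈ Set.Ico x y, chain (knotFn δ₀ M C) L t = 0) :
    ∀ t ∈ Set.Ico (k * M) ((k + 1) * M), chain (knotFn δ₀ M C) L t = 0 := by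
  induction L with
  | nil =>
    intro t ht
    have h1 := h x ⟨le_rfl, hxy⟩
    change knotFn δ₀ M C x = 0 at h1
    change knotFn δ₀ M C t = 0
    rw [knotFn, floor_div_eq hM ⟨hx, hxy.trans_le hy⟩] at h1
    rw [knotFn, floor_div_eq hM ht, (mul_eq_zero.mp h1).resolve_left (Real.exp_pos _).ne',
      mul_zero]
  | cons δ L ih =>
    have hL' : ∀ d ∈ L, d ≠ 0 := fun d hd => hL d (by simp [hd])
    have hb := chain_bddMeas hG L hL'
    have h1 := eq_zero_of_expAvg_eq_zero hb (hL δ (by simp))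
      (chain_rightCont hG (knotFn_rightCont hM C) L hL') h
    exact expAvg_eq_zero_of_eq_zero hb (hL δ (by simp)) (ih hL' h1)
      ⟨hx, hxy.trans_le hy⟩ (h x ⟨le_rfl, hxy⟩)

lemma chain_alt_long {G : ℝ → ℝ} (hG : BddMeas G) (L : List ℝ) (hL : ∀ δ ∈ L, δ ≠ 0) {N : ℕ}
    {α β : ℝ} (h : AltOn (chain G L) (N + L.length) α β) : AltOn G N α β := by
  induction L with
  | nil => exact h
  | cons δ L ih =>
    have hL' : ∀ d ∈ L, d ≠ 0 := fun d hd => hL d (by simp [hd])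
    exact ih hL' (AltOn.step (chain_bddMeas hG L hL') (hL δ (by simp)) h)

/-- If the chain vanishes on an interval ending at `α`, no alternation on `(α, β)` is lost on the
way down to `G`. -/
lemma chain_alt_block {G : ℝ → ℝ} (hG : BddMeas G)
    (hGr : ∀ x, ContinuousWithinAt G (Set.Ici x) x) (L : List ℝ) (hL : ∀ δ ∈ L, δ ≠ 0) {N : ℕ}
    {w α β : ℝ} (hw : w < α) (hαβ : α ≤ β) (hz : ∀ t ∈ Set.Ico w α, chain G L t = 0)
    (h : AltOn (chain G L) N α β) : AltOn G N α β := by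
  induction L with
  | nil => exact h
  | cons δ L ih =>
    have hL' : ∀ d ∈ L, d ≠ 0 := fun d hd => hL d (by simp [hd])
    have hδ := hL δ (by simp)
    have hb := chain_bddMeas hG L hL'
    refine ih hL' (eq_zero_of_expAvg_eq_zero hb hδ (chain_rightCont hG hGr L hL') hz) ?_
    refine AltOn.step_of_zero hb hδ hαβ ?_ h
    have hcl : α ∈ closure (Set.Ico w α) := by
      rw [closure_Ico hw.ne]; exact ⟨hw.le, le_rfl⟩
    exact closure_minimal (s := Set.Ico w α) (t := {t | expAvg δ (chain G L) t = 0}) hz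
      (isClosed_eq (expAvg_continuous hb hδ) continuous_const) hcl

/-- Zeros of the chain that are separated by nonzero values produce alternations one level
down. -/
lemma chain_alt_of_zeros {δ₀ M : ℝ} (hM : 0 < M) {C : ℤ → ℝ} (hG : BddMeas (knotFn δ₀ M C))
    {δ : ℝ} {L : List ℝ} (hL : ∀ d ∈ δ :: L, d ≠ 0) {N : ℕ} (z : ℕ → ℝ)
    (hlt : ∀ i < N, z i < z (i + 1))
    (h0 : ∀ i ≤ N, chain (knotFn δ₀ M C) (δ :: L) (z i) = 0)
    (hne : ∀ i < N, ¬ ∀ t ∈ Set.Ico ((⌊z i / M⌋ : ℝ) * M) ((⌊z i / M⌋ + 1) * M),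
      chain (knotFn δ₀ M C) (δ :: L) t = 0) :
    AltOn (chain (knotFn δ₀ M C) L) N (z 0) (z N) := by
  have hL' : ∀ d ∈ L, d ≠ 0 := fun d hd => hL d (by simp [hd])
  have hb := chain_bddMeas hG L hL'
  have hδ := hL δ (by simp)
  have h : ∀ i, ∃ t, i < N → t ∈ Set.Ioo (z i) (z (i + 1)) ∧
      0 < (-1 : ℝ) ^ i * chain (knotFn δ₀ M C) L t := by
    intro i
    by_cases hi : i < N
    · have hk := mem_knot hM (z i)
      obtain ⟨w, hw, hw0⟩ : ∃ w ∈ Set.Ioo (z i) (z (i + 1)),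
          chain (knotFn δ₀ M C) (δ :: L) w ≠ 0 := by
        by_contra! hcon
        refine hne i hi (chain_zero_on_knot hM hG _ hL (lt_min (hlt i hi) hk.2) hk.1
          (min_le_right _ _) fun t ht => ?_)
        rcases ht.1.eq_or_lt with h | h
        · rw [← h]; exact h0 i hi.le
        · exact hcon t ⟨h, ht.2.trans_le (min_le_left _ _)⟩
      obtain ⟨t, ht, h⟩ := expAvg_exists_sign hb hδ hw.1 hw.2 (h0 i hi.le) (h0 (i + 1) hi) hw0
        (σ := (-1) ^ i) (by simp)
      exact ⟨t, fun _ => ⟨ht, h⟩⟩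
    · exact ⟨0, fun h => absurd h hi⟩
  choose y hy using h
  have hmono : ∀ i j, i ≤ j → j ≤ N → z i ≤ z j := by
    intro i j hij
    induction j, hij using Nat.le_induction with
    | base => intro _; exact le_rfl
    | succ j _ ih => intro hj; exact (ih (by omega)).trans (hlt j hj).le
  refine ⟨1, y, fun i hi => ?_, fun i hi => ?_, fun i hi => ?_⟩
  · exact ⟨(hmono 0 i (by omega) hi.le).trans_lt (hy i hi).1.1,
      (hy i hi).1.2.trans_le (hmono _ _ hi le_rfl)⟩
  · exact (hy i (by omega)).1.2.trans (hy (i + 1) hi).1.1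
  · rw [one_mul]; exact (hy i hi).2

/-- A periodic chain with equally spaced knots that vanishes on a denser progression has
vanishing knot coefficients. -/
theorem chain_coeff_eq_zero {δ₀ M a r : ℝ} (ha : 0 < a) (haM : a < M) {C : ℤ → ℝ}
    (hG : BddMeas (knotFn δ₀ M C)) {L : List ℝ} (hL : ∀ d ∈ L, d ≠ 0) (hL1 : L ≠ [])
    {n : ℕ} (hn : 0 < n)
    (hper : ∀ x, chain (knotFn δ₀ M C) L (x + n * M) = chain (knotFn δ₀ M C) L x)
    (hzero : ∀ k : ℤ, chain (knotFn δ₀ M C) L (r + k * a) = 0) (k : ℤ) : C k = 0 := by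
  have hM : 0 < M := ha.trans haM
  obtain ⟨δ, L, rfl⟩ := List.exists_cons_of_ne_nil hL1
  have hL' : ∀ d ∈ L, d ≠ 0 := fun d hd => hL d (by simp [hd])
  set Φ := chain (knotFn δ₀ M C) (δ :: L) with hΦ
  have hcont : Continuous Φ := expAvg_continuous (chain_bddMeas hG L hL') (hL δ (by simp))
  -- `Z k`: the chain vanishes on the `k`-th knot interval
  let Z : ℤ → Prop := fun k => ∀ t ∈ Set.Ico ((k : ℝ) * M) ((k + 1) * M), Φ t = 0
  by_cases hall : ∀ k, Z k
  · have hdown : ∀ (L : List ℝ), (∀ d ∈ L, d ≠ 0) →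
        (∀ t ∈ Set.Ico ((k : ℝ) * M) ((k + 1) * M), chain (knotFn δ₀ M C) L t = 0) → C k = 0 := by
      intro L hL h
      induction L with
      | nil =>
        have hm : (k * M : ℝ) ∈ Set.Ico ((k : ℝ) * M) ((k + 1) * M) := ⟨le_rfl, by linarith⟩
        have h1 := h _ hm
        change knotFn δ₀ M C _ = 0 at h1
        rw [knotFn, floor_div_eq hM hm] at h1
        exact (mul_eq_zero.mp h1).resolve_left (Real.exp_pos _).ne'
      | cons δ L ih =>
        have hL' : ∀ d ∈ L, d ≠ 0 := fun d hd => hL d (by simp [hd])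
        exact ih hL' (eq_zero_of_expAvg_eq_zero (chain_bddMeas hG L hL') (hL δ (by simp))
          (chain_rightCont hG (knotFn_rightCont hM C) L hL') h)
    exact hdown _ hL (hall k)
  exfalso
  push Not at hall
  obtain ⟨k₁, hk₁⟩ := hall
  by_cases hex : ∃ k₀, Z k₀
  · -- a maximal block `[p M, q M)` of knot intervals on which the chain does not vanish
    obtain ⟨k₀, hk₀⟩ := hex
    have hshift : ∀ k, Z k → Z (k + n) ∧ Z (k - n) := by
      intro k hk
      constructor <;> intro t ht <;> push_cast at ht
      · rw [← sub_add_cancel t (n * M), hper]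
        exact hk _ ⟨by linarith [ht.1], by linarith [ht.2]⟩
      · rw [← hper]
        exact hk _ ⟨by linarith [ht.1], by linarith [ht.2]⟩
    have hshift' : ∀ j : ℕ, Z (k₀ + j * n) ∧ Z (k₀ - j * n) := by
      intro j
      induction j with
      | zero => simpa using hk₀
      | succ j ih =>
        have h1 := (hshift _ ih.1).1
        have h2 := (hshift _ ih.2).2
        push_cast
        refine ⟨?_, ?_⟩
        · convert h1 using 1; ring
        · convert h2 using 1; ring
    obtain ⟨p', ⟨hp'1, hp'2⟩, hp'3⟩ := Int.exists_greatest_of_bdd (P := fun k => Z k ∧ k ≤ k₁)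
      ⟨k₁, fun z hz => hz.2⟩ ⟨k₀ - (k₀ - k₁).natAbs * n, (hshift' _).2, by
        have : ((k₀ - k₁).natAbs : ℤ) ≤ (k₀ - k₁).natAbs * n := by
          apply le_mul_of_one_le_right <;> omega
        omega⟩
    obtain ⟨q, ⟨hq1, hq2⟩, hq3⟩ := Int.exists_least_of_bdd (P := fun k => Z k ∧ k₁ ≤ k)
      ⟨k₁, fun z hz => hz.2⟩ ⟨k₀ + (k₀ - k₁).natAbs * n, (hshift' _).1, by
        have : ((k₀ - k₁).natAbs : ℤ) ≤ (k₀ - k₁).natAbs * n := by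
          apply le_mul_of_one_le_right <;> omega
        omega⟩
    have hpk : p' ≠ k₁ := fun h => hk₁ (h ▸ hp'1)
    have hqk : q ≠ k₁ := fun h => hk₁ (h ▸ hq1)
    have hmid : ∀ k, p' < k → k < q → ¬ Z k := by
      intro k h1 h2 hz
      rcases le_total k k₁ with h | h
      · have := hp'3 k ⟨hz, h⟩; omega
      · have := hq3 k ⟨hz, h⟩; omega
    obtain ⟨p, rfl⟩ : ∃ p, p' = p - 1 := ⟨p' + 1, by ring⟩
    obtain ⟨ℓ, hℓ⟩ : ∃ ℓ : ℕ, q = p + ℓ := ⟨(q - p).toNat, by omega⟩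
    have hℓ0 : 0 < ℓ := by omega
    have hqr : (q : ℝ) = p + ℓ := by rw [hℓ]; push_cast; ring
    have hpz : ∀ t ∈ Set.Ico (((p : ℝ) - 1) * M) (p * M), Φ t = 0 := by
      intro t ht
      exact hp'1 t (by push_cast; simpa using ht)
    have hp0 : Φ (p * M) = 0 := by
      have hw : ((p : ℝ) - 1) * M < p * M := by linarith
      have hcl : (p : ℝ) * M ∈ closure (Set.Ico (((p : ℝ) - 1) * M) (p * M)) := by
        rw [closure_Ico hw.ne]; exact ⟨hw.le, le_rfl⟩
      exact closure_minimal (t := {t | Φ t = 0}) hpz (isClosed_eq hcont continuous_const) hcl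
    have hq0 : Φ (q * M) = 0 := hq1 _ ⟨le_rfl, by linarith⟩
    -- the zeros in the block, both endpoints counted, number at least `ℓ + 2`
    let κ : ℤ := ⌊(p * M - r) / a⌋
    have hκ1 : r + κ * a ≤ p * M := by
      have := (le_div_iff₀ ha).mp (Int.floor_le ((p * M - r) / a)); linarith
    have hκ2 : p * M < r + (κ + 1) * a := by
      have := (div_lt_iff₀ ha).mp (Int.lt_floor_add_one ((p * M - r) / a)); linarith
    let z : ℕ → ℝ := fun i => if i = 0 then p * M else min (q * M) (r + (κ + i) * a)
    have hin : ∀ i : ℕ, i ≤ ℓ → r + (κ + i) * a < q * M := by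
      intro i hi
      have h1 : (i : ℝ) ≤ ℓ := by exact_mod_cast hi
      have h2 : (0 : ℝ) < ℓ := by exact_mod_cast hℓ0
      rw [hqr]
      nlinarith
    have hzi : ∀ i : ℕ, i ≠ 0 → i ≤ ℓ → z i = r + (κ + i) * a := by
      intro i h0 hi
      simp only [z, h0, if_false]
      exact min_eq_right (hin i hi).le
    have hzlt : ∀ i < ℓ + 1, z i < z (i + 1) := by
      intro i hi
      have h2 : z (i + 1) = min (q * M) (r + (κ + (i + 1 : ℕ)) * a) := by simp [z]
      rcases Nat.eq_zero_or_pos i with rfl | h0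
      · have h1 : z 0 = p * M := by simp [z]
        rw [h1, h2]
        refine lt_min ?_ ?_
        · rw [hqr]
          have : (0 : ℝ) < ℓ := by exact_mod_cast hℓ0
          nlinarith
        · simpa using hκ2
      · rw [hzi i h0.ne' (by omega), h2]
        refine lt_min (hin i (by omega)) ?_
        push_cast; linarith
    have hz0 : ∀ i ≤ ℓ + 1, Φ (z i) = 0 := by
      intro i hi
      rcases Nat.eq_zero_or_pos i with rfl | h0
      · simpa [z] using hp0
      · simp only [z, h0.ne', if_false]
        rcases min_choice ((q : ℝ) * M) (r + (κ + i) * a) with h | h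
        · rw [h]; exact hq0
        · rw [h]
          have := hzero (κ + i)
          push_cast at this
          exact this
    have hzge : ∀ i ≤ ℓ + 1, p * M ≤ z i := by
      intro i
      induction i with
      | zero => intro _; simp [z]
      | succ i ih => intro hi; exact (ih (by omega)).trans (hzlt i hi).le
    have hzle : z (ℓ + 1) ≤ q * M := by simp [z]
    have halt := chain_alt_of_zeros hM hG hL z hzlt hz0 (by
      intro i hi
      have hfl : ⌊z i / M⌋ < q := by
        rw [Int.floor_lt, div_lt_iff₀ hM]
        rcases Nat.eq_zero_or_pos i with rfl | h0
        · have h1 : z 0 = p * M := by simp [z]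
          rw [h1, hqr]
          have : (0 : ℝ) < ℓ := by exact_mod_cast hℓ0
          nlinarith
        · rw [hzi i h0.ne' (by omega)]
          exact hin i (by omega)
      have hfg : p ≤ ⌊z i / M⌋ := by
        rw [Int.le_floor, le_div_iff₀ hM]
        exact hzge i hi.le
      exact hmid _ (by omega) hfl)
    have hblock := chain_alt_block hG (knotFn_rightCont hM C) L hL'
      (w := ((p : ℝ) - 1) * M) (by simp [z]; linarith) (hzge _ le_rfl |>.trans' (by simp [z]))
      (by
        have := eq_zero_of_expAvg_eq_zero (chain_bddMeas hG L hL') (hL δ (by simp))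
          (chain_rightCont hG (knotFn_rightCont hM C) L hL') hpz
        simpa [z] using this) halt
    obtain ⟨x, hx, y, hy, hxy⟩ := hblock.floor_le hM
    have h1 : p ≤ ⌊x / M⌋ := by
      rw [Int.le_floor, le_div_iff₀ hM]
      have : z 0 = p * M := by simp [z]
      rw [← this]; exact hx.1.le
    have h2 : ⌊y / M⌋ < q := by
      rw [Int.floor_lt, div_lt_iff₀ hM]
      exact hy.2.trans_le hzle
    omega
  · -- no knot interval of zeros: compare densities on a long window
    push Not at hex
    obtain ⟨N, hN⟩ := exists_nat_gt ((L.length + 2) * M / (M - a))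
    rw [div_lt_iff₀ (by linarith)] at hN
    let z : ℕ → ℝ := fun i => r + i * a
    have hNL : L.length < N := by
      have h1 : ((L.length : ℝ) + 2) * M < N * M := by
        have : (0 : ℝ) ≤ N := Nat.cast_nonneg _
        nlinarith
      have h2 := lt_of_mul_lt_mul_right h1 hM.le
      exact_mod_cast (by linarith : (L.length : ℝ) < N)
    have halt := chain_alt_of_zeros hM hG hL (N := N) z
      (fun i _ => by simp only [z]; push_cast; linarith)
      (fun i _ => by simpa [z] using hzero i) (fun i _ => hex _)
    obtain ⟨N', rfl⟩ : ∃ N', N = N' + 1 + L.length := ⟨N - 1 - L.length, by omega⟩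
    obtain ⟨x, hx, y, hy, hxy⟩ := (chain_alt_long hG L hL' halt).floor_le hM
    have h1 := (mem_knot hM x).2
    have h2 := (mem_knot hM y).1
    have h3 : (⌊x / M⌋ : ℝ) + N' ≤ ⌊y / M⌋ := by exact_mod_cast hxy
    have h4 := mul_le_mul_of_nonneg_right h3 hM.le
    have h5 := hx.1
    have h6 := hy.2
    simp only [z] at h5 h6
    push_cast at h5 h6 hN
    linarith

/-! ### Representation of the window as an iterated convolution -/

/-- The one-sided exponential with Fourier transform `(1 + 2πiδξ)⁻¹`, supported on the side of the
sign of `δ` and right-continuous. -/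
noncomputable def expKernel (δ x : ℝ) : ℝ :=
  if (0 ≤ x ↔ 0 < δ) then |δ|⁻¹ * Real.exp (-x / δ) else 0

lemma expKernel_measurable (δ : ℝ) : Measurable (expKernel δ) := by
  unfold expKernel
  refine Measurable.ite ?_ (by fun_prop) measurable_const
  by_cases h : 0 < δ
  · convert measurableSet_Ici (a := (0 : ℝ)) using 1
    ext x; simp [h]
  · convert measurableSet_Iio (a := (0 : ℝ)) using 1
    ext x; simp [h]

lemma expKernel_decay {δ κ : ℝ} (hδ : δ ≠ 0) (hκδ : κ * |δ| ≤ 1 / 2) (x : ℝ) :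
    |expKernel δ x| ≤ |δ|⁻¹ * Real.exp (-κ * |x|) := by
  have hd : 0 < |δ| := abs_pos.mpr hδ
  unfold expKernel
  split_ifs with h
  · rw [abs_of_nonneg (by positivity)]
    have hx : -x / δ = -(|x| / |δ|) := by
      rcases lt_or_gt_of_ne hδ with h1 | h1
      · have : x < 0 := by
          by_contra hc; exact absurd (h.mp (not_lt.mp hc)) h1.not_gt
        rw [abs_of_neg h1, abs_of_neg this]
        field_simp
      · rw [abs_of_pos h1, abs_of_nonneg (h.mpr h1)]
        ring
    rw [hx]
    gcongr
    rw [neg_mul, neg_le_neg_iff, le_div_iff₀ hd]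
    nlinarith [abs_nonneg x]
  · rw [abs_zero]; positivity

lemma expAvg_decay {f : ℝ → ℝ} {δ κ D : ℝ} (hκ : 0 ≤ κ) (hκδ : κ * |δ| ≤ 1 / 2)
    (hD : ∀ x, |f x| ≤ D * Real.exp (-κ * |x|)) (x : ℝ) :
    |expAvg δ f x| ≤ 2 * D * Real.exp (-κ * |x|) := by
  have hD0 : 0 ≤ D := by simpa using (abs_nonneg _).trans (hD 0)
  have hint := integrableOn_exp_mul_Ioi (a := -(1 / 2)) (by norm_num) 0
  have := norm_integral_le_of_norm_le (μ := volume.restrict (Set.Ioi (0 : ℝ)))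
    (f := fun t => Real.exp (-t) * f (x - δ * t))
    (hint.const_mul (D * Real.exp (-κ * |x|)))
    ((ae_restrict_mem measurableSet_Ioi).mono fun t ht => by
      have ht : 0 < t := ht
      rw [norm_mul, Real.norm_of_nonneg (Real.exp_nonneg _), Real.norm_eq_abs]
      refine (mul_le_mul_of_nonneg_left (hD _) (Real.exp_nonneg _)).trans ?_
      rw [mul_left_comm, ← Real.exp_add, mul_assoc, ← Real.exp_add]
      refine mul_le_mul_of_nonneg_left (Real.exp_le_exp.mpr ?_) hD0
      have h1 : |x| ≤ |x - δ * t| + |δ| * t := by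
        have := abs_add_le (x - δ * t) (δ * t)
        rwa [sub_add_cancel, abs_mul, abs_of_pos ht] at this
      have h2 := mul_le_mul_of_nonneg_left h1 hκ
      have h3 := mul_le_mul_of_nonneg_right hκδ ht.le
      linarith)
  rw [integral_const_mul, integral_exp_mul_Ioi (by norm_num)] at this
  refine this.trans (le_of_eq ?_)
  norm_num
  ring

lemma chain_decay {δ₀ κ : ℝ} (hδ₀ : δ₀ ≠ 0) (hκ : 0 ≤ κ) (L : List ℝ)
    (hκδ : ∀ d ∈ δ₀ :: L, κ * |d| ≤ 1 / 2) :
    ∃ D, ∀ x, |chain (expKernel δ₀) L x| ≤ D * Real.exp (-κ * |x|) := by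
  induction L with
  | nil => exact ⟨_, expKernel_decay hδ₀ (hκδ δ₀ (by simp))⟩
  | cons d L ih =>
    obtain ⟨D, hD⟩ := ih fun e he => hκδ e (by
      rcases List.mem_cons.mp he with h | h <;> simp [h])
    exact ⟨2 * D, expAvg_decay hκ (hκδ d (by simp)) hD⟩

lemma exists_decay_rate (L : List ℝ) : ∃ κ : ℝ, 0 < κ ∧ ∀ d ∈ L, κ * |d| ≤ 1 / 2 := by
  induction L with
  | nil => exact ⟨1, one_pos, by simp⟩
  | cons d L ih =>
    obtain ⟨κ, h0, h⟩ := ih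
    have hd : 0 < 2 * (|d| + 1) := by positivity
    refine ⟨min κ (1 / (2 * (|d| + 1))), lt_min h0 (by positivity), fun e he => ?_⟩
    rcases List.mem_cons.mp he with rfl | he
    · calc _ ≤ 1 / (2 * (|e| + 1)) * |e| := by gcongr; exact min_le_right _ _
        _ ≤ 1 / 2 := by rw [div_mul_eq_mul_div, div_le_div_iff₀ hd two_pos]; linarith
    · exact le_trans (by gcongr; exact min_le_left _ _) (h e he)

lemma expKernel_bddMeas {δ : ℝ} (hδ : δ ≠ 0) : BddMeas (expKernel δ) := by
  refine ⟨expKernel_measurable δ, |δ|⁻¹, fun x => ?_⟩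
  simpa using expKernel_decay (κ := 0) hδ (by norm_num) x

lemma integrable_exp_neg_abs {κ : ℝ} (hκ : 0 < κ) :
    Integrable (fun x : ℝ => Real.exp (-κ * |x|)) := by
  have h1 : IntegrableOn (fun x : ℝ => Real.exp (-κ * |x|)) (Set.Ioi 0) := by
    refine (integrableOn_exp_mul_Ioi (a := -κ) (by linarith) 0).congr_fun (fun t ht => ?_)
      measurableSet_Ioi
    simp only [abs_of_pos (Set.mem_Ioi.mp ht)]
  have h2 : IntegrableOn (fun x : ℝ => Real.exp (-κ * |x|)) (Set.Iic 0) := by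
    refine (integrableOn_exp_mul_Iic (a := κ) hκ 0).congr_fun (fun t ht => ?_)
      measurableSet_Iic
    simp only [abs_of_nonpos (Set.mem_Iic.mp ht)]
    ring_nf
  rw [← integrableOn_univ, ← Set.Iic_union_Ioi (a := (0 : ℝ))]
  exact h2.union h1

lemma integrable_of_decay {f : ℝ → ℝ} (hf : Measurable f) {κ D : ℝ} (hκ : 0 < κ)
    (hD : ∀ x, |f x| ≤ D * Real.exp (-κ * |x|)) : Integrable f :=
  ((integrable_exp_neg_abs hκ).const_mul D).mono' hf.aestronglyMeasurable
    (Filter.Eventually.of_forall hD)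

lemma fourier_expAvg {f : ℝ → ℝ} (hm : Measurable f) (hf : Integrable f) (δ ξ : ℝ) :
    𝓕 (fun x => (expAvg δ f x : ℂ)) ξ =
      (1 + 2 * (Real.pi : ℂ) * Complex.I * (δ : ℂ) * (ξ : ℂ))⁻¹ * 𝓕 (fun x => (f x : ℂ)) ξ := by
  simp only [Real.fourier_real_eq_integral_exp_smul, smul_eq_mul, expAvg]
  set ν : Measure ℝ := volume.restrict (Set.Ioi 0) with hν
  let e : ℝ → ℂ := fun x => Complex.exp (↑(-2 * Real.pi * x * ξ) * Complex.I)
  have he : ∀ x, ‖e x‖ = 1 := fun x => Complex.norm_exp_ofReal_mul_I _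
  have hec : Continuous e := by fun_prop
  let H : ℝ → ℝ → ℂ := fun x t => e x * ((Real.exp (-t) * f (x - δ * t) : ℝ) : ℂ)
  have hHm : Measurable (Function.uncurry H) := by
    have : Measurable fun p : ℝ × ℝ => f (p.1 - δ * p.2) := hm.comp (by fun_prop)
    have h2 : Measurable fun p : ℝ × ℝ => e p.1 := hec.measurable.comp measurable_fst
    exact h2.mul (Complex.measurable_ofReal.comp
      ((by fun_prop : Measurable fun p : ℝ × ℝ => Real.exp (-p.2)).mul this))
  have hHn : ∀ x t, ‖H x t‖ = Real.exp (-t) * ‖f (x - δ * t)‖ := by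
    intro x t
    simp only [H]
    rw [norm_mul, he, one_mul, Complex.norm_real, norm_mul,
      Real.norm_of_nonneg (Real.exp_nonneg _)]
  have hHi : Integrable (Function.uncurry H) (volume.prod ν) := by
    rw [integrable_prod_iff' hHm.aestronglyMeasurable]
    constructor
    · refine Filter.Eventually.of_forall fun t => ?_
      have h1 : Integrable (fun x => Real.exp (-t) * f (x - δ * t)) :=
        (hf.comp_sub_right (δ * t)).const_mul _
      exact h1.ofReal.bdd_mul (c := 1) hec.aestronglyMeasurable
        (Filter.Eventually.of_forall fun x => (he x).le)
    · simp only [Function.uncurry, hHn, integral_const_mul]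
      have : ∀ t, ∫ x, ‖f (x - δ * t)‖ = ∫ x, ‖f x‖ := fun t =>
        integral_sub_right_eq_self (fun x => ‖f x‖) (δ * t)
      simp only [this]
      exact integrableOn_exp_neg_Ioi_zero.mul_const _
  have h1 : ∀ x, e x * ((∫ t in Set.Ioi 0, Real.exp (-t) * f (x - δ * t) : ℝ) : ℂ) =
      ∫ t, H x t ∂ν := by
    intro x
    rw [← integral_complex_ofReal, ← integral_const_mul]
  change ∫ x, e x * ((∫ t in Set.Ioi 0, Real.exp (-t) * f (x - δ * t) : ℝ) : ℂ) = _
  simp only [h1]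
  rw [integral_integral_swap hHi]
  have h2 : ∀ t, ∫ x, H x t = Complex.exp (-(1 + 2 * (Real.pi : ℂ) * Complex.I * δ * ξ) * t) *
      ∫ x, e x * (f x : ℂ) := by
    intro t
    rw [← integral_sub_right_eq_self (fun x => e x * (f x : ℂ)) (δ * t), ← integral_const_mul]
    congr 1; ext x
    simp only [H, e]
    rw [Complex.ofReal_mul (Real.exp (-t)), Complex.ofReal_exp, ← mul_assoc, ← mul_assoc, ← Complex.exp_add,
      ← Complex.exp_add]
    congr 2
    push_cast
    ring
  simp only [h2]
  rw [integral_mul_const, integral_exp_mul_complex_Ioi (by simp)]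
  congr 1
  rw [Complex.ofReal_zero, mul_zero, Complex.exp_zero, neg_div_neg_eq, one_div]

lemma fourier_expKernel {δ : ℝ} (hδ : δ ≠ 0) (ξ : ℝ) :
    𝓕 (fun x => (expKernel δ x : ℂ)) ξ =
      (1 + 2 * (Real.pi : ℂ) * Complex.I * (δ : ℂ) * (ξ : ℂ))⁻¹ := by
  simp only [Real.fourier_real_eq_integral_exp_smul, smul_eq_mul]
  have hδ' : (δ : ℂ) ≠ 0 := by exact_mod_cast hδ
  set w : ℂ := 1 + 2 * (Real.pi : ℂ) * Complex.I * (δ : ℂ) * (ξ : ℂ) with hw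
  have hw0 : w ≠ 0 := by
    intro h
    have := congrArg Complex.re h
    simp [hw] at this
  have hre : (-w / δ).re = -1 / δ := by
    rw [Complex.div_ofReal_re]; simp [hw]
  have hexp : ∀ x : ℝ, Complex.exp (↑(-2 * Real.pi * x * ξ) * Complex.I) *
      ((|δ|⁻¹ * Real.exp (-x / δ) : ℝ) : ℂ) = (|δ|⁻¹ : ℝ) * Complex.exp (-w / δ * x) := by
    intro x
    rw [Complex.ofReal_mul |δ|⁻¹, Complex.ofReal_exp, mul_left_comm, ← Complex.exp_add]
    congr 2
    push_cast
    rw [hw]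
    field_simp
    ring
  rcases lt_or_gt_of_ne hδ with h | h
  · have : ∀ x : ℝ, Complex.exp (↑(-2 * Real.pi * x * ξ) * Complex.I) * (expKernel δ x : ℂ) =
        (Set.Iio (0 : ℝ)).indicator
          (fun x : ℝ => ((|δ|⁻¹ : ℝ) : ℂ) * Complex.exp (-w / δ * x)) x := by
      intro x
      simp only [Set.indicator, expKernel, h.not_gt, iff_false, not_le, Set.mem_Iio]
      split_ifs with hx
      · exact hexp x
      · simp
    simp only [this]
    rw [integral_indicator measurableSet_Iio, integral_const_mul, ← integral_Iic_eq_integral_Iio,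
      integral_exp_mul_complex_Iic (by rw [hre]; exact div_pos_of_neg_of_neg (by norm_num) h),
      abs_of_neg h]
    push_cast
    simp
    field_simp
  · have : ∀ x : ℝ, Complex.exp (↑(-2 * Real.pi * x * ξ) * Complex.I) * (expKernel δ x : ℂ) =
        (Set.Ici (0 : ℝ)).indicator
          (fun x : ℝ => ((|δ|⁻¹ : ℝ) : ℂ) * Complex.exp (-w / δ * x)) x := by
      intro x
      simp only [Set.indicator, expKernel, h, iff_true, Set.mem_Ici]
      split_ifs with hx
      · exact hexp x
      · simp
    simp only [this]
    rw [integral_indicator measurableSet_Ici, integral_const_mul, integral_Ici_eq_integral_Ioi,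
      integral_exp_mul_complex_Ioi (by rw [hre]; exact div_neg_of_neg_of_pos (by norm_num) h),
      abs_of_pos h]
    push_cast
    simp
    field_simp

lemma fourier_chain {δ₀ : ℝ} (hδ₀ : δ₀ ≠ 0) (L : List ℝ) (hL : ∀ d ∈ L, d ≠ 0) (ξ : ℝ) :
    𝓕 (fun x => (chain (expKernel δ₀) L x : ℂ)) ξ =
      (1 + 2 * (Real.pi : ℂ) * Complex.I * (δ₀ : ℂ) * (ξ : ℂ))⁻¹ *
      (L.map fun d : ℝ => (1 + 2 * (Real.pi : ℂ) * Complex.I * (d : ℂ) * (ξ : ℂ))⁻¹).prod := by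
  induction L with
  | nil =>
    rw [List.map_nil, List.prod_nil, mul_one]
    exact fourier_expKernel hδ₀ ξ
  | cons d L ih =>
    have hL' : ∀ d ∈ L, d ≠ 0 := fun d hd => hL d (by simp [hd])
    have hb := chain_bddMeas (expKernel_bddMeas hδ₀) L hL'
    obtain ⟨κ, hκ, hκd⟩ := exists_decay_rate (δ₀ :: L)
    obtain ⟨D, hD⟩ := chain_decay hδ₀ hκ.le L hκd
    rw [chain_cons, fourier_expAvg hb.1 (integrable_of_decay hb.1 hκ hD), ih hL', List.map_cons,
      List.prod_cons]
    ring

lemma norm_factor_le_one (δ ξ : ℝ) :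
    ‖(1 + 2 * (Real.pi : ℂ) * Complex.I * (δ : ℂ) * (ξ : ℂ))⁻¹‖ ≤ 1 := by
  rw [norm_inv]
  refine inv_le_one_of_one_le₀ ?_
  have := Complex.abs_re_le_norm (1 + 2 * (Real.pi : ℂ) * Complex.I * (δ : ℂ) * (ξ : ℂ))
  simpa using this

lemma integrable_factor_sq {δ : ℝ} (hδ : δ ≠ 0) :
    Integrable (fun ξ : ℝ =>
      ‖(1 + 2 * (Real.pi : ℂ) * Complex.I * (δ : ℂ) * (ξ : ℂ))⁻¹‖ ^ 2) := by
  have h := integrable_inv_one_add_sq.comp_mul_left' (R := 2 * Real.pi * δ)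
    (by have := Real.pi_pos; positivity)
  refine h.congr (Filter.Eventually.of_forall fun ξ => ?_)
  simp only [norm_inv, inv_pow]
  congr 1
  have : (1 + 2 * (Real.pi : ℂ) * Complex.I * (δ : ℂ) * (ξ : ℂ)) =
      ((1 : ℝ) : ℂ) + ((2 * Real.pi * δ * ξ : ℝ) : ℂ) * Complex.I := by push_cast; ring
  rw [← Complex.normSq_eq_norm_sq, this, Complex.normSq_add_mul_I]
  ring

/-- The function of the theorem is the iterated convolution of one-sided exponentials: both are
recovered by Fourier inversion from the same integrable transform. -/
lemma eq_chain {m : ℕ} (δ : Fin (m + 2) → ℝ) (hδ0 : ∀ i, δ i ≠ 0)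
    (g : ℝ → ℂ) (hgcont : Continuous g) (hg : Integrable g)
    (hFT : ∀ ξ : ℝ, 𝓕 g ξ =
      ∏ k : Fin (m + 2), (1 + 2 * (Real.pi : ℂ) * Complex.I * (δ k : ℂ) * (ξ : ℂ))⁻¹) (x : ℝ) :
    g x = (chain (expKernel (δ 0)) (List.ofFn fun i : Fin (m + 1) => δ i.succ) x : ℂ) := by
  set L := List.ofFn fun i : Fin (m + 1) => δ i.succ with hLdef
  have hL : ∀ d ∈ L, d ≠ 0 := by
    intro d hd
    obtain ⟨i, rfl⟩ := (List.mem_ofFn' _ _).mp hd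
    exact hδ0 _
  have hL1 : L = δ 1 :: List.ofFn fun i : Fin m => δ i.succ.succ := by
    rw [hLdef, List.ofFn_succ]; rfl
  have hb := chain_bddMeas (expKernel_bddMeas (hδ0 0)) L hL
  obtain ⟨κ, hκ, hκd⟩ := exists_decay_rate (δ 0 :: L)
  obtain ⟨D, hD⟩ := chain_decay (hδ0 0) hκ.le L hκd
  have hint : Integrable fun x => (chain (expKernel (δ 0)) L x : ℂ) :=
    (integrable_of_decay hb.1 hκ hD).ofReal
  have hcont : Continuous fun x => (chain (expKernel (δ 0)) L x : ℂ) := by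
    rw [hL1, chain_cons]
    refine Complex.continuous_ofReal.comp (expAvg_continuous (chain_bddMeas
      (expKernel_bddMeas (hδ0 0)) _ ?_) (hδ0 1))
    intro d hd
    exact hL d (by rw [hL1]; simp [hd])
  have hF : 𝓕 g = 𝓕 (fun x => (chain (expKernel (δ 0)) L x : ℂ)) := by
    ext ξ
    rw [hFT, fourier_chain (hδ0 0) L hL, Fin.prod_univ_succ, hLdef, List.map_ofFn, List.prod_ofFn]
    rfl
  have hFi : Integrable (𝓕 g) := by
    have hmeas : AEStronglyMeasurable (𝓕 g) :=
      (VectorFourier.fourierIntegral_continuous Real.continuous_fourierChar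
        (by exact continuous_inner) hg).aestronglyMeasurable
    refine ((integrable_factor_sq (hδ0 0)).add (integrable_factor_sq (hδ0 1))).mono' hmeas ?_
    refine Filter.Eventually.of_forall fun ξ => ?_
    rw [hFT, Fin.prod_univ_succ, Fin.prod_univ_succ, ← mul_assoc, norm_mul, norm_mul]
    set A := ‖(1 + 2 * (Real.pi : ℂ) * Complex.I * (δ 0 : ℂ) * (ξ : ℂ))⁻¹‖
    have hA : (0 : ℝ) ≤ A := norm_nonneg _
    have hrest : ‖∏ i : Fin m,
        (1 + 2 * (Real.pi : ℂ) * Complex.I * (δ i.succ.succ : ℂ) * (ξ : ℂ))⁻¹‖ ≤ 1 := by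
      rw [norm_prod]
      exact Finset.prod_le_one (fun _ _ => norm_nonneg _) fun i _ => norm_factor_le_one _ _
    have h1 : δ (Fin.succ 0) = δ 1 := rfl
    rw [h1]
    simp only [Pi.add_apply]
    set B := ‖(1 + 2 * (Real.pi : ℂ) * Complex.I * (δ 1 : ℂ) * (ξ : ℂ))⁻¹‖
    have hB : (0 : ℝ) ≤ B := norm_nonneg _
    calc _ ≤ A * B * 1 := by gcongr
      _ ≤ A ^ 2 + B ^ 2 := by nlinarith [sq_nonneg (A - B)]
  have e1 := hgcont.fourierInv_fourier_eq hg hFi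
  have e2 := hcont.fourierInv_fourier_eq hint (hF ▸ hFi)
  rw [← hF, e1] at e2
  exact congrFun e2 x

/-! ### Periodic combinations of shifts -/

lemma summable_exp_neg_abs_int {η : ℝ} (hη : 0 < η) :
    Summable fun s : ℤ => Real.exp (-η * |(s : ℝ)|) := by
  have h := (Real.summable_exp_nat_mul_iff (a := -η)).mpr (by linarith)
  refine Summable.of_nat_of_neg ?_ ?_ <;>
  · refine h.congr fun n => ?_
    simp [mul_comm]

lemma exp_shift_le {κ M : ℝ} (hκ : 0 < κ) (hM : 0 < M) (x : ℝ) (s : ℤ) :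
    Real.exp (-κ * |x - s * M|) ≤
      Real.exp (κ * M) * Real.exp (-(κ * M) * |((⌊x / M⌋ - s : ℤ) : ℝ)|) := by
  rw [← Real.exp_add]
  refine Real.exp_le_exp.mpr ?_
  have hm := mem_knot hM x
  have h1 : |((⌊x / M⌋ - s : ℤ) : ℝ)| * M ≤ |x - s * M| + M := by
    have e : |((⌊x / M⌋ - s : ℤ) : ℝ)| * M = |(x - s * M) + (⌊x / M⌋ * M - x)| := by
      rw [← abs_of_pos hM, ← abs_mul, abs_of_pos hM]
      push_cast
      congr 1; ring
    rw [e]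
    refine (abs_add_le _ _).trans (add_le_add_right ?_ _)
    rw [abs_le]
    constructor <;> linarith [hm.1, hm.2]
  nlinarith

lemma summable_exp_shift {κ M : ℝ} (hκ : 0 < κ) (hM : 0 < M) (x : ℝ) :
    Summable fun s : ℤ => Real.exp (-κ * |x - s * M|) := by
  refine Summable.of_nonneg_of_le (fun _ => Real.exp_nonneg _) (exp_shift_le hκ hM x) ?_
  exact (((Equiv.subLeft ⌊x / M⌋).summable_iff (f := fun s : ℤ => Real.exp (-(κ * M) * |(s : ℝ)|))).mpr
    (summable_exp_neg_abs_int (mul_pos hκ hM))).mul_left _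

lemma tsum_exp_shift_le {κ M : ℝ} (hκ : 0 < κ) (hM : 0 < M) (x : ℝ) :
    ∑' s : ℤ, Real.exp (-κ * |x - s * M|) ≤
      Real.exp (κ * M) * ∑' s : ℤ, Real.exp (-(κ * M) * |(s : ℝ)|) := by
  rw [← (Equiv.subLeft ⌊x / M⌋).tsum_eq (fun s : ℤ => Real.exp (-(κ * M) * |(s : ℝ)|)),
    ← tsum_mul_left]
  refine Summable.tsum_le_tsum (exp_shift_le hκ hM x) (summable_exp_shift hκ hM x) ?_
  exact (((Equiv.subLeft ⌊x / M⌋).summable_iff (f := fun s : ℤ => Real.exp (-(κ * M) * |(s : ℝ)|))).mpr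
    (summable_exp_neg_abs_int (mul_pos hκ hM))).mul_left _

lemma abs_mul_shift_le {f : ℝ → ℝ} {κ D B M : ℝ} (hD : ∀ x, |f x| ≤ D * Real.exp (-κ * |x|))
    {c : ℤ → ℝ} (hc : ∀ s, |c s| ≤ B) (x : ℝ) (s : ℤ) :
    |c s * f (x - s * M)| ≤ B * D * Real.exp (-κ * |x - s * M|) := by
  rw [abs_mul, mul_assoc]
  exact mul_le_mul (hc s) (hD _) (abs_nonneg _) ((abs_nonneg _).trans (hc s))

lemma summable_shift {f : ℝ → ℝ} {κ D B M : ℝ} (hκ : 0 < κ) (hM : 0 < M)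
    (hD : ∀ x, |f x| ≤ D * Real.exp (-κ * |x|))
    {c : ℤ → ℝ} (hc : ∀ s, |c s| ≤ B) (x : ℝ) : Summable fun s : ℤ => c s * f (x - s * M) :=
  Summable.of_norm_bounded ((summable_exp_shift hκ hM x).mul_left (B * D))
    (abs_mul_shift_le hD hc x)

/-- `expAvg` commutes with forming `∑ c s * f (· - s M)`. -/
lemma expAvg_shift {f : ℝ → ℝ} (hf : Measurable f) {κ D B M δ : ℝ} (hκ : 0 < κ) (hM : 0 < M)
    (hκδ : κ * |δ| ≤ 1 / 2) (hD : ∀ x, |f x| ≤ D * Real.exp (-κ * |x|))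
    {c : ℤ → ℝ} (hc : ∀ s, |c s| ≤ B) (x : ℝ) :
    expAvg δ (fun y => ∑' s : ℤ, c s * f (y - s * M)) x =
      ∑' s : ℤ, c s * expAvg δ f (x - s * M) := by
  have hD0 : 0 ≤ D := by simpa using (abs_nonneg _).trans (hD 0)
  have hint : ∀ y : ℝ, IntegrableOn (fun t => Real.exp (-t) * f (y - δ * t)) (Set.Ioi 0) := by
    intro y
    refine Integrable.mul_bdd (c := D) integrableOn_exp_neg_Ioi_zero
      (hf.comp (by fun_prop)).aestronglyMeasurable (Filter.Eventually.of_forall fun t => ?_)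
    refine (hD _).trans (mul_le_of_le_one_right hD0 (Real.exp_le_one_iff.mpr ?_))
    nlinarith [abs_nonneg (y - δ * t)]
  have hsw := integral_tsum_of_summable_integral_norm
    (μ := volume.restrict (Set.Ioi (0 : ℝ)))
    (F := fun (s : ℤ) t => c s * (Real.exp (-t) * f ((x - s * M) - δ * t)))
    (fun s => (hint _).const_mul _) (by
      have hDabs : ∀ x, |(fun y => |f y|) x| ≤ D * Real.exp (-κ * |x|) := by simpa using hD
      refine Summable.of_nonneg_of_le (fun s => integral_nonneg fun _ => norm_nonneg _)
        (fun s => ?_) ((summable_exp_shift hκ hM x).mul_left (B * (2 * D)))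
      have h1 := abs_mul_shift_le (M := M) (expAvg_decay hκ.le hκδ hDabs) hc x s
      refine le_trans (le_of_eq ?_) h1
      rw [abs_mul, expAvg, abs_of_nonneg (integral_nonneg fun t => by positivity),
        ← integral_const_mul]
      congr 1; ext t
      rw [norm_mul, norm_mul, Real.norm_of_nonneg (Real.exp_nonneg _)]
      rfl)
  simp only [expAvg, ← integral_const_mul]
  rw [hsw]
  congr 1; ext t
  rw [← tsum_mul_left]
  congr 1; ext s
  rw [show x - δ * t - s * M = x - s * M - δ * t by ring]
  ring

/-- The coefficients on the knot intervals of `∑ c s * expKernel δ (· - s M)`. -/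
noncomputable def knotCoeff (δ M : ℝ) (c : ℤ → ℝ) (k : ℤ) : ℝ :=
  ∑' s : ℤ, c s * if (s ≤ k ↔ 0 < δ) then |δ|⁻¹ * Real.exp (s * M / δ) else 0

lemma shift_expKernel {δ M : ℝ} (hM : 0 < M) (c : ℤ → ℝ) (x : ℝ) (s : ℤ) :
    c s * expKernel δ (x - s * M) = Real.exp (-x / δ) *
      (c s * if (s ≤ ⌊x / M⌋ ↔ 0 < δ) then |δ|⁻¹ * Real.exp (s * M / δ) else 0) := by
  have hiff : 0 ≤ x - s * M ↔ s ≤ ⌊x / M⌋ := by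
    rw [Int.le_floor, le_div_iff₀ hM, sub_nonneg]
  unfold expKernel
  simp only [hiff]
  split_ifs
  · rw [show -(x - s * M) / δ = -x / δ + s * M / δ by ring, Real.exp_add]
    ring
  · simp

lemma knotFn_knotCoeff {δ M : ℝ} (hM : 0 < M) (c : ℤ → ℝ) (x : ℝ) :
    knotFn δ M (knotCoeff δ M c) x = ∑' s : ℤ, c s * expKernel δ (x - s * M) := by
  simp only [shift_expKernel hM]
  rw [tsum_mul_left]
  rfl

lemma knotFn_bddMeas {δ M B : ℝ} (hδ : δ ≠ 0) (hM : 0 < M) {c : ℤ → ℝ} (hc : ∀ s, |c s| ≤ B) :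
    BddMeas (knotFn δ M (knotCoeff δ M c)) := by
  constructor
  · have h1 : Measurable fun x : ℝ => knotCoeff δ M c ⌊x / M⌋ :=
      (measurable_from_top (f := knotCoeff δ M c)).comp
        (Int.measurable_floor.comp (by fun_prop : Measurable fun x : ℝ => x / M))
    exact (by fun_prop : Measurable fun x : ℝ => Real.exp (-x / δ)).mul h1
  · obtain ⟨κ, hκ, hκd⟩ := exists_decay_rate [δ]
    have hB : 0 ≤ B := (abs_nonneg _).trans (hc 0)
    have hD := expKernel_decay hδ (hκd δ (by simp))
    refine ⟨B * |δ|⁻¹ * (Real.exp (κ * M) * ∑' s : ℤ, Real.exp (-(κ * M) * |(s : ℝ)|)),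
      fun x => ?_⟩
    rw [knotFn_knotCoeff hM]
    have h1 := tsum_of_norm_bounded (f := fun s : ℤ => c s * expKernel δ (x - s * M))
      ((summable_exp_shift hκ hM x).mul_left (B * |δ|⁻¹)).hasSum
      (abs_mul_shift_le (M := M) hD hc x)
    rw [tsum_mul_left] at h1
    refine h1.trans ?_
    gcongr
    exact tsum_exp_shift_le hκ hM x

lemma shift_chain {δ₀ M B : ℝ} (hδ₀ : δ₀ ≠ 0) (hM : 0 < M) {c : ℤ → ℝ} (hc : ∀ s, |c s| ≤ B)
    (L : List ℝ) (hL : ∀ d ∈ L, d ≠ 0) (x : ℝ) :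
    chain (knotFn δ₀ M (knotCoeff δ₀ M c)) L x =
      ∑' s : ℤ, c s * chain (expKernel δ₀) L (x - s * M) := by
  induction L generalizing x with
  | nil => exact knotFn_knotCoeff hM c x
  | cons d L ih =>
    have hL' : ∀ d ∈ L, d ≠ 0 := fun d hd => hL d (by simp [hd])
    have hb := chain_bddMeas (expKernel_bddMeas hδ₀) L hL'
    obtain ⟨κ, hκ, hκd⟩ := exists_decay_rate (d :: δ₀ :: L)
    obtain ⟨D, hD⟩ := chain_decay hδ₀ hκ.le L fun e he => hκd e (by simp at he ⊢; tauto)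
    rw [chain_cons, chain_cons, ← expAvg_shift hb.1 hκ hM (hκd d (by simp)) hD hc,
      funext (ih hL')]

/-- Consecutive values of `knotCoeff` differ by a nonzero multiple of one `c k`. -/
lemma coeff_eq_zero_of_knotCoeff {δ M B : ℝ} (hδ : δ ≠ 0) (hM : 0 < M) {c : ℤ → ℝ}
    (hc : ∀ s, |c s| ≤ B) (h : ∀ k, knotCoeff δ M c k = 0) (k : ℤ) : c k = 0 := by
  obtain ⟨κ, hκ, hκd⟩ := exists_decay_rate [δ]
  have hs : ∀ k : ℤ, Summable fun s : ℤ =>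
      c s * if (s ≤ k ↔ 0 < δ) then |δ|⁻¹ * Real.exp (s * M / δ) else 0 := by
    intro k
    have h1 := summable_shift hκ hM (expKernel_decay hδ (hκd δ (by simp))) hc (k * M)
    simp only [shift_expKernel hM] at h1
    have h2 := (summable_mul_left_iff (Real.exp_pos _).ne').mp h1
    have h3 : ⌊(k : ℝ) * M / M⌋ = k := by rw [mul_div_cancel_right₀ _ hM.ne', Int.floor_intCast]
    rwa [h3] at h2
  have hd := (hs k).tsum_sub (hs (k - 1))
  change _ = knotCoeff δ M c k - knotCoeff δ M c (k - 1) at hd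
  rw [h, h, sub_zero, tsum_eq_single k] at hd
  · have hp : |δ|⁻¹ * Real.exp (k * M / δ) ≠ 0 := by
      have := Real.exp_pos (k * M / δ)
      have := abs_pos.mpr hδ
      positivity
    have h1 : ¬ k ≤ k - 1 := by omega
    by_cases hδ' : 0 < δ
    · simp only [le_refl, h1, hδ', if_true, iff_true, if_false, mul_zero, sub_zero] at hd
      exact (mul_eq_zero.mp hd).resolve_right hp
    · simp only [le_refl, h1, hδ', if_true, iff_false, not_true, if_false, mul_zero,
        zero_sub, neg_eq_zero] at hd
      exact (mul_eq_zero.mp hd).resolve_right hp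
  · intro s hsk
    have : s ≤ k - 1 ↔ s ≤ k := by omega
    simp only [this, sub_self]

/-- A periodic combination of `M ℤ`-shifts of the window that vanishes on a translate of `a ℤ`,
`a < M`, is trivial. -/
theorem shift_coeff_eq_zero {δ₀ M a r B : ℝ} (hδ₀ : δ₀ ≠ 0) (ha : 0 < a) (haM : a < M)
    {c : ℤ → ℝ} (hc : ∀ s, |c s| ≤ B) {L : List ℝ} (hL : ∀ d ∈ L, d ≠ 0) (hL1 : L ≠ [])
    {n : ℕ} (hn : 0 < n) (hper : ∀ s, c (s + n) = c s) {N : ℕ} (hN : 0 < N)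
    (hNn : (N : ℝ) * a = n * M)
    (hzero : ∀ k < N, ∑' s : ℤ, c s * chain (expKernel δ₀) L (r - k * a - s * M) = 0) (k : ℤ) :
    c k = 0 := by
  have hM : 0 < M := ha.trans haM
  have hP : Function.Periodic (chain (knotFn δ₀ M (knotCoeff δ₀ M c)) L) (n * M) := by
    intro x
    rw [shift_chain hδ₀ hM hc L hL, shift_chain hδ₀ hM hc L hL,
      ← (Equiv.addRight (n : ℤ)).tsum_eq]
    congr 1; ext s
    rw [Equiv.coe_addRight, hper]
    congr 2
    push_cast
    ring
  refine coeff_eq_zero_of_knotCoeff hδ₀ hM hc (chain_coeff_eq_zero (r := r) ha haM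
    (knotFn_bddMeas hδ₀ hM hc) hL hL1 hn hP fun k => ?_) k
  -- reduce `-k` modulo the number `N` of zeros per period
  have hNz : (N : ℤ) ≠ 0 := by exact_mod_cast hN.ne'
  obtain ⟨i, hi⟩ := Int.eq_ofNat_of_zero_le (Int.emod_nonneg (-k) hNz)
  have hiN : i < N := by
    have := Int.emod_lt_of_pos (-k) (by exact_mod_cast hN : (0 : ℤ) < N)
    omega
  have h1 := hzero i hiN
  rw [← shift_chain hδ₀ hM hc L hL, ← hP.sub_int_mul_eq (-k / N)] at h1
  rw [← h1]
  congr 1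
  have h2 : -k = N * (-k / N) + i := by
    rw [← hi]; exact (Int.mul_ediv_add_emod (-k) N).symm
  have h3 : -(k : ℝ) = N * ((-k / N : ℤ) : ℝ) + i := by exact_mod_cast h2
  rw [← hNn]
  linear_combination (-a) * h3

/-! ### Reduction of the frame property -/

/-- In finite dimension a Gabor family is a frame as soon as its analysis map is injective. -/
lemma isGaborFrameC_of_injective {G : ℤ → ℂ} {K a M : ℕ}
    (h : ∀ f : Fin K → ℂ, (∀ k < K / a, ∀ l < M, gaborCoefC G K a M f k l = 0) → ∀ j, f j = 0) :
    IsGaborFrameC G K a M := by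
  let T : EuclideanSpace ℂ (Fin K) →ₗ[ℂ] EuclideanSpace ℂ (Fin (K / a) × Fin M) :=
    { toFun := fun f => WithLp.toLp 2 fun p => gaborCoefC G K a M f p.1 p.2
      map_add' := fun f f' => by
        ext p
        simp [gaborCoefC, add_mul, Finset.sum_add_distrib]
      map_smul' := fun z f => by
        ext p
        simp [gaborCoefC, Finset.mul_sum, mul_assoc] }
  have hnorm : ∀ f : Fin K → ℂ, ‖T (WithLp.toLp 2 f)‖ ^ 2 =
      ∑ k ∈ Finset.range (K / a), ∑ l ∈ Finset.range M, ‖gaborCoefC G K a M f k l‖ ^ 2 := by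
    intro f
    rw [EuclideanSpace.norm_sq_eq, Fintype.sum_prod_type, Finset.sum_range]
    refine Finset.sum_congr rfl fun k _ => ?_
    rw [Finset.sum_range]
    rfl
  have hker : LinearMap.ker T = ⊥ := by
    refine LinearMap.ker_eq_bot'.mpr fun f hf => ?_
    ext j
    refine h f (fun k hk l hl => ?_) j
    exact congrFun (congrArg WithLp.ofLp hf) (⟨k, hk⟩, ⟨l, hl⟩)
  obtain ⟨C, hC, hT⟩ := T.exists_antilipschitzWith hker
  have hC' : (0 : ℝ) < C := by exact_mod_cast hC
  refine ⟨((C : ℝ) ^ 2)⁻¹, ‖LinearMap.toContinuousLinearMap T‖ ^ 2 + 1, by positivity,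
    by positivity, fun f => ?_⟩
  rw [← hnorm]
  have e : ∑ j : Fin K, ‖f j‖ ^ 2 = ‖(WithLp.toLp 2 f : EuclideanSpace ℂ (Fin K))‖ ^ 2 := by
    rw [EuclideanSpace.norm_sq_eq]
  rw [e]
  set F : EuclideanSpace ℂ (Fin K) := WithLp.toLp 2 f
  constructor
  · rw [inv_mul_le_iff₀ (by positivity), ← mul_pow]
    have h1 := hT.le_mul_dist F 0
    rw [map_zero, dist_zero_right, dist_zero_right] at h1
    exact pow_le_pow_left₀ (norm_nonneg _) h1 2
  · have h1 : ‖T F‖ ≤ ‖LinearMap.toContinuousLinearMap T‖ * ‖F‖ :=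
      (LinearMap.toContinuousLinearMap T).le_opNorm F
    have h2 := pow_le_pow_left₀ (norm_nonneg _) h1 2
    rw [mul_pow] at h2
    nlinarith [sq_nonneg ‖F‖]

lemma sum_exp_char {M : ℕ} (hM : 0 < M) (r j : ℕ) :
    ∑ l ∈ Finset.range M, star (Complex.exp (2 * (Real.pi : ℂ) * Complex.I * (l : ℂ) * (j : ℂ) / (M : ℂ)))
      * Complex.exp (2 * (Real.pi : ℂ) * Complex.I * (l : ℂ) * (r : ℂ) / (M : ℂ)) =
      if (M : ℤ) ∣ (r : ℤ) - j then (M : ℂ) else 0 := by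
  have hζ := Complex.isPrimitiveRoot_exp M hM.ne'
  set ζ := Complex.exp (2 * Real.pi * Complex.I / M) with hζdef
  have e : ∀ l : ℕ, star (Complex.exp (2 * (Real.pi : ℂ) * Complex.I * (l : ℂ) * (j : ℂ) / (M : ℂ)))
      * Complex.exp (2 * (Real.pi : ℂ) * Complex.I * (l : ℂ) * (r : ℂ) / (M : ℂ)) =
      (ζ ^ ((r : ℤ) - j)) ^ l := by
    intro l
    rw [Complex.star_def, ← Complex.exp_conj, ← Complex.exp_add, hζdef, ← Complex.exp_int_mul,
      ← Complex.exp_nat_mul]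
    congr 1
    simp only [map_div₀, map_mul, Complex.conj_ofReal, Complex.conj_I, map_natCast, map_ofNat]
    push_cast
    ring
  simp only [e]
  split_ifs with hd
  · rw [(hζ.zpow_eq_one_iff_dvd _).mpr hd]
    simp
  · have hne : ζ ^ ((r : ℤ) - j) ≠ 1 := fun h => hd ((hζ.zpow_eq_one_iff_dvd _).mp h)
    rw [geom_sum_eq hne, ← zpow_natCast, ← zpow_mul, mul_comm, zpow_mul, zpow_natCast,
      hζ.pow_eq_one, one_zpow, sub_self, zero_div]

/-- Vanishing of the Gabor coefficients at `k` decouples over the residue classes modulo `M`. -/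
lemma sum_residue_eq_zero {G : ℤ → ℂ} {K a M : ℕ} (hM : 0 < M) {f : Fin K → ℂ} {k : ℕ}
    (h : ∀ l < M, gaborCoefC G K a M f k l = 0) (r : ℕ) :
    ∑ j : Fin K, (if (M : ℤ) ∣ (r : ℤ) - (j : ℕ) then
      f j * star (G ((j : ℤ) - k * (a : ℤ))) else 0) = 0 := by
  have hMc : (M : ℂ) ≠ 0 := by exact_mod_cast hM.ne'
  have h1 : ∑ l ∈ Finset.range M, gaborCoefC G K a M f k l *
      Complex.exp (2 * (Real.pi : ℂ) * Complex.I * (l : ℂ) * (r : ℂ) / (M : ℂ)) = 0 :=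
    Finset.sum_eq_zero fun l hl => by rw [h l (Finset.mem_range.mp hl), zero_mul]
  simp only [gaborCoefC, Finset.sum_mul] at h1
  rw [Finset.sum_comm] at h1
  refine (mul_eq_zero.mp ?_).resolve_left hMc
  rw [Finset.mul_sum]
  refine Eq.trans ?_ h1
  refine Finset.sum_congr rfl fun j _ => ?_
  have h2 := sum_exp_char hM r j
  calc _ = f j * star (G ((j : ℤ) - k * (a : ℤ))) *
        (if (M : ℤ) ∣ (r : ℤ) - (j : ℕ) then (M : ℂ) else 0) := by
        split_ifs <;> ring
    _ = _ := by
        rw [← h2, Finset.mul_sum]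
        refine Finset.sum_congr rfl fun l _ => ?_
        rw [star_mul']
        ring

/-- The `K`-periodic extension to `ℤ` of a vector indexed by `Fin K`. -/
noncomputable def periodicExt {K : ℕ} (hK : 0 < K) (u : Fin K → ℝ) (z : ℤ) : ℝ :=
  u ⟨(z % K).toNat, by
    have := Int.emod_nonneg z (by omega : (K : ℤ) ≠ 0)
    have := Int.emod_lt_of_pos z (by omega : (0 : ℤ) < K)
    omega⟩

lemma periodicExt_add_mul {K : ℕ} (hK : 0 < K) (u : Fin K → ℝ) (z n : ℤ) :
    periodicExt hK u (z + n * K) = periodicExt hK u z := by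
  unfold periodicExt
  congr 2
  rw [Int.add_mul_emod_self_right]

lemma periodicExt_coe {K : ℕ} (hK : 0 < K) (u : Fin K → ℝ) (j : Fin K) :
    periodicExt hK u ((j : ℕ) : ℤ) = u j := by
  unfold periodicExt
  congr 1
  ext
  have := Int.emod_eq_of_lt (a := ((j : ℕ) : ℤ)) (b := K) (by omega) (by omega)
  simp only [this]
  omega

/-- Both sides are the sum of `u z * G (z - x)` over the integers `z ≡ r` modulo `M`, with `u`
extended periodically. -/
lemma sum_residue_eq_tsum {G : ℝ → ℝ} {κ D : ℝ} (hκ : 0 < κ)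
    (hD : ∀ x, |G x| ≤ D * Real.exp (-κ * |x|)) {K M : ℕ} (hK : 0 < K) (hM : 0 < M)
    (hKM : M ∣ K) (u : Fin K → ℝ) (r : ℤ) (x : ℝ) :
    ∑ j : Fin K, (if (M : ℤ) ∣ r - (j : ℕ) then
        u j * ∑' n : ℤ, G ((j : ℕ) - x - n * K) else 0) =
      ∑' s : ℤ, periodicExt hK u (r - s * M) * G (r - x - s * M) := by
  classical
  have : NeZero K := ⟨hK.ne'⟩
  let w : ℤ → ℝ := fun z => if (M : ℤ) ∣ r - z then periodicExt hK u z else 0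
  have hw : ∀ z, |w z| ≤ ∑ j, |u j| := by
    intro z
    simp only [w]
    split_ifs
    · exact Finset.single_le_sum (f := fun j => |u j|) (fun _ _ => abs_nonneg _)
        (Finset.mem_univ _)
    · rw [abs_zero]
      exact Finset.sum_nonneg fun _ _ => abs_nonneg _
  let φ : ℤ → ℝ := fun z => w z * G (z - x)
  have hφ : Summable φ := by
    have h1 := summable_shift (f := fun y => G (-y)) (D := D) hκ one_pos
      (fun y => by simpa using hD (-y)) hw x
    refine h1.congr fun z => ?_
    simp only [φ, mul_one, neg_sub]
  have hR : ∑' s : ℤ, periodicExt hK u (r - s * M) * G (r - x - s * M) = ∑' z, φ z := by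
    have hinj : Function.Injective fun s : ℤ => r - s * M := by
      intro s t hst
      have hM' : (M : ℤ) ≠ 0 := by omega
      have : s * (M : ℤ) = t * M := by simpa using hst
      exact mul_right_cancel₀ hM' this
    rw [← hinj.tsum_eq (f := φ)]
    · congr 1; ext s
      simp only [φ, w]
      rw [if_pos (by simp)]
      congr 2
      push_cast
      ring
    · intro z hz
      by_contra hcon
      refine hz ?_
      simp only [φ, w]
      rw [if_neg, zero_mul]
      rintro ⟨s, hs⟩
      exact hcon ⟨s, by simp only; linarith⟩
  have hMK : (M : ℤ) ∣ K := by exact_mod_cast hKM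
  have hφ' := (Int.divModEquiv K).symm.summable_iff.mpr hφ
  have hL := (Int.divModEquiv K).symm.tsum_eq φ
  have hS := Summable.tsum_prod ((Equiv.prodComm (Fin K) ℤ).summable_iff.mpr hφ')
  rw [tsum_fintype (β := Fin K)] at hS
  rw [hR, ← hL, ← (Equiv.prodComm (Fin K) ℤ).tsum_eq]
  refine Eq.trans ?_ hS.symm
  refine Finset.sum_congr rfl fun j _ => ?_
  have hval : ∀ n : ℤ, φ ((Int.divModEquiv K).symm (n, j)) =
      (if (M : ℤ) ∣ r - (j : ℕ) then u j else 0) * G ((j : ℕ) - x + n * K) := by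
    intro n
    have hdv : (M : ℤ) ∣ r - ((j : ℕ) + n * K) ↔ (M : ℤ) ∣ r - (j : ℕ) := by
      rw [← sub_sub]
      exact dvd_sub_left (hMK.mul_left n)
    have he : (Int.divModEquiv K).symm (n, j) = ((j : ℕ) : ℤ) + n * K := by
      simp [Int.divModEquiv]
      ring
    simp only [φ, w, he, hdv, periodicExt_add_mul, periodicExt_coe]
    congr 2
    push_cast
    ring
  calc _ = (if (M : ℤ) ∣ r - (j : ℕ) then u j else 0) * ∑' n : ℤ, G ((j : ℕ) - x - n * K) := by
        split_ifs <;> simp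
    _ = _ := by
        rw [← tsum_mul_left, ← (Equiv.neg ℤ).tsum_eq]
        congr 1; ext n
        refine Eq.trans ?_ (hval n).symm
        congr 2
        simp

theorem stmt10 (m : ℕ) (hm : 2 ≤ m) (δ : Fin m → ℝ) (hδ0 : ∀ i, δ i ≠ 0)
    (g : ℝ → ℂ) (hgcont : Continuous g) (hg : Integrable g)
    (hFT : ∀ ξ : ℝ, 𝓕 g ξ =
      ∏ k : Fin m, (1 + 2 * (Real.pi : ℂ) * Complex.I * (δ k : ℂ) * (ξ : ℂ))⁻¹)
    (a K M : ℕ) (ha : 0 < a) (hK : 0 < K) (hM : 0 < M)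
    (hKa : a ∣ K) (hKM : M ∣ K) (haM : (a : ℝ) / M < 1) :
    IsGaborFrameC (periodizeSample K g) K a M := by
  obtain ⟨m, rfl⟩ : ∃ n, m = n + 2 := ⟨m - 2, by omega⟩
  set L := List.ofFn fun i : Fin (m + 1) => δ i.succ with hLdef
  have hgL : ∀ x, g x = (chain (expKernel (δ 0)) L x : ℂ) := eq_chain δ hδ0 g hgcont hg hFT
  have hL : ∀ d ∈ L, d ≠ 0 := by
    intro d hd
    obtain ⟨i, rfl⟩ := (List.mem_ofFn' _ _).mp hd
    exact hδ0 _
  have hL1 : L ≠ [] := by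
    intro h
    have := congrArg List.length h
    simp [hLdef] at this
  obtain ⟨κ, hκ, hκd⟩ := exists_decay_rate (δ 0 :: L)
  obtain ⟨D, hD⟩ := chain_decay (hδ0 0) hκ.le L hκd
  have hM' : (0 : ℝ) < M := by exact_mod_cast hM
  have haM' : (a : ℝ) < M := by rwa [div_lt_one hM'] at haM
  set G := chain (expKernel (δ 0)) L
  obtain ⟨n, hn⟩ := hKM
  have hn0 : 0 < n := Nat.pos_of_ne_zero fun h => by simp [h] at hn; omega
  have hNa : K / a * a = K := Nat.div_mul_cancel hKa
  have hN0 : 0 < K / a := Nat.div_pos (Nat.le_of_dvd hK hKa) ha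
  have hper : ∀ j : ℤ, periodizeSample K g j = ((∑' n : ℤ, G ((j : ℝ) - n * K) : ℝ) : ℂ) := by
    intro j
    rw [Complex.ofReal_tsum]
    exact tsum_congr fun n => hgL _
  refine isGaborFrameC_of_injective fun f hf r => ?_
  -- real and imaginary parts of `f` are killed separately, as the window is real
  have key : ∀ u : Fin K → ℝ, (∀ k < K / a, ∑ j : Fin K, (if (M : ℤ) ∣ ((r : ℕ) : ℤ) - (j : ℕ) then
      u j * ∑' n : ℤ, G ((j : ℕ) - k * a - n * K) else 0) = 0) → u r = 0 := by
    intro u hu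
    have h0 := shift_coeff_eq_zero (r := (r : ℕ)) (n := n) (N := K / a)
      (c := fun s => periodicExt hK u ((r : ℕ) - s * M)) (B := ∑ j, |u j|)
      (hδ0 0) (by exact_mod_cast ha) haM'
      (fun s => Finset.single_le_sum (f := fun j => |u j|) (fun _ _ => abs_nonneg _)
        (Finset.mem_univ _)) hL hL1 hn0 (fun s => ?_) hN0 ?_ (fun k hk => ?_) 0
    · simpa [periodicExt_coe] using h0
    · rw [← periodicExt_add_mul hK u _ 1]
      congr 1
      have hn' : (K : ℤ) = M * n := by exact_mod_cast hn
      linear_combination hn'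
    · rw [mul_comm (n : ℝ)]
      exact_mod_cast hNa.trans hn
    · refine Eq.trans ?_ (hu k hk)
      rw [sum_residue_eq_tsum hκ hD hK hM ⟨n, hn⟩ u (r : ℕ) (k * a), Int.cast_natCast]
  have hsum : ∀ k < K / a, ∑ j : Fin K, (if (M : ℤ) ∣ ((r : ℕ) : ℤ) - (j : ℕ) then
      f j * ((∑' n : ℤ, G ((j : ℕ) - k * a - n * K) : ℝ) : ℂ) else 0) = 0 := by
    intro k hk
    refine Eq.trans ?_ (sum_residue_eq_zero hM (hf k hk) r)
    refine Finset.sum_congr rfl fun j _ => ?_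
    rw [hper, Complex.star_def, Complex.conj_ofReal]
    push_cast
    rfl
  refine Complex.ext (key (fun j => (f j).re) fun k hk => ?_)
    (key (fun j => (f j).im) fun k hk => ?_)
  · have := congrArg Complex.re (hsum k hk)
    rw [Complex.re_sum, Complex.zero_re] at this
    refine Eq.trans ?_ this
    refine Finset.sum_congr rfl fun j _ => ?_
    split_ifs
    · rw [Complex.re_mul_ofReal]
    · rfl
  · have := congrArg Complex.im (hsum k hk)
    rw [Complex.im_sum, Complex.zero_im] at this
    refine Eq.trans ?_ this
    refine Finset.sum_congr rfl fun j _ => ?_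
    split_ifs
    · rw [Complex.im_mul_ofReal]
    · rfl
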